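/- Suppose vectors in ℝ^N satisfy qⁿ⁺¹ − qⁿ = −D(yⁿ⁺¹ + yⁿ) − ζ·g where D is symmetric, g_i = (V̂(y_i^{n+1}) − V̂(y_i^n))/(y_i^{n+1} − y_i^n) componentwise (each component with y_i^{n+1} ≠ y_i^n), together with yⁿ⁺¹ − yⁿ = qⁿ⁺¹ + qⁿ. Then the discrete energy H(y,q) = qᵗq + yᵗDy + ζ·Σ_i V̂(y_i) is exactly conserved: H(yⁿ⁺¹, qⁿ⁺¹) = H(yⁿ, qⁿ). -/

import Mathlib

open Matrix

/-- Exact conservation of the discrete energy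
H(y,q) = qᵗq + yᵗDy + ζΣᵢ V̂(yᵢ) for the distributed mid-point scheme. -/
theorem stmt11 (N : ℕ) (hN : 1 ≤ N) (D : Matrix (Fin N) (Fin N) ℝ)
    (hD : D.IsSymm) (ζ : ℝ) (Vh : ℝ → ℝ)
    (y0 y1 q0 q1 g : Fin N → ℝ)
    (hne : ∀ i, y1 i ≠ y0 i)
    (hg : ∀ i, g i = (Vh (y1 i) - Vh (y0 i)) / (y1 i - y0 i))
    (hq : q1 - q0 = -(D.mulVec (y1 + y0)) - ζ • g)
    (hy : y1 - y0 = q1 + q0) :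
    q1 ⬝ᵥ q1 + y1 ⬝ᵥ D.mulVec y1 + ζ * ∑ i, Vh (y1 i) =
      q0 ⬝ᵥ q0 + y0 ⬝ᵥ D.mulVec y0 + ζ * ∑ i, Vh (y0 i) := by
  -- Pair the momentum update with `y1 - y0`, written as `q1 + q0` on the left: each side
  -- then telescopes into differences of the three energy terms.
  have key : (q1 + q0) ⬝ᵥ (q1 - q0) =
      (y1 - y0) ⬝ᵥ (-(D.mulVec (y1 + y0)) - ζ • g) := by
    rw [hq, hy]
  have hpot : (y1 - y0) ⬝ᵥ g = ∑ i, Vh (y1 i) - ∑ i, Vh (y0 i) := by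
    rw [dotProduct, ← Finset.sum_sub_distrib]
    refine Finset.sum_congr rfl fun i _ => ?_
    rw [hg, Pi.sub_apply, mul_div_cancel₀ _ (sub_ne_zero.mpr (hne i))]
  -- Symmetry of `D` cancels the cross terms of `(y1 - y0)ᵀ D (y1 + y0)`.
  have hcross : y1 ⬝ᵥ D.mulVec y0 = y0 ⬝ᵥ D.mulVec y1 := by
    rw [dotProduct_mulVec, ← mulVec_transpose, hD.eq, dotProduct_comm]
  rw [dotProduct_sub (y1 - y0), dotProduct_smul, hpot] at key
  simp only [dotProduct_neg, mulVec_add, dotProduct_add, dotProduct_sub, add_dotProduct,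
    sub_dotProduct, smul_eq_mul, hcross, dotProduct_comm q0 q1] at key
  linarith
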